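/- Let Ψ be a C³ divergence-free vector field on ℝ², T⁰ a C² scalar field, F⁰ a C¹ vector field, and β a constant. If (∂Ψ₁/∂x₂)(∂Ψ₂/∂x₁) + (∂Ψ₁/∂x₁)² + (β/2)ΔT⁰ - (1/2)div F⁰ = 0 everywhere, then for every t ∈ ℝ the vector field v(x,t) = Ψ(x) + t[μΔΨ - (Ψ·∇)Ψ - β∇T⁰ + F⁰](x) is divergence-free. -/

import Mathlib

/-!
Write `a = Ψ₁`, `b = Ψ₂`, so that `∂₂b = -∂₁a`. Since mixed partial derivatives commute,
`div ΔΨ = Δ div Ψ = 0`. In `div ((Ψ·∇)Ψ)` the second-order terms add up to `(Ψ·∇) div Ψ = 0`, so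
that only `(∂₁a)² + 2 ∂₂a ∂₁b + (∂₂b)² = 2 (∂₂a ∂₁b + (∂₁a)²)` is left. The divergence of the
bracket is therefore `-2` times the left-hand side of the compatibility condition. The symmetry of
second derivatives is `pd_comm`; the rest is the product rule.
-/

/-- Partial derivative ∂f/∂xᵢ of a scalar field on ℝ². -/
noncomputable def pd (f : (Fin 2 → ℝ) → ℝ) (i : Fin 2) : (Fin 2 → ℝ) → ℝ :=
  fun x => fderiv ℝ f x (Pi.single i 1)

/-- Divergence of a planar vector field. -/
noncomputable def div2 (u : (Fin 2 → ℝ) → Fin 2 → ℝ) : (Fin 2 → ℝ) → ℝ :=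
  fun x => pd (fun y => u y 0) 0 x + pd (fun y => u y 1) 1 x

/-- Convective derivative (u·∇)u of a planar vector field. -/
noncomputable def conv2 (u : (Fin 2 → ℝ) → Fin 2 → ℝ) : (Fin 2 → ℝ) → Fin 2 → ℝ :=
  fun x i => u x 0 * pd (fun y => u y i) 0 x + u x 1 * pd (fun y => u y i) 1 x

/-- Laplacian of a scalar field on ℝ². -/
noncomputable def lap2 (f : (Fin 2 → ℝ) → ℝ) : (Fin 2 → ℝ) → ℝ :=
  fun x => pd (pd f 0) 0 x + pd (pd f 1) 1 x

/-- Componentwise Laplacian of a planar vector field. -/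
noncomputable def lapv (u : (Fin 2 → ℝ) → Fin 2 → ℝ) : (Fin 2 → ℝ) → Fin 2 → ℝ :=
  fun x i => lap2 (fun y => u y i) x

section PartialDerivatives

variable {f g : (Fin 2 → ℝ) → ℝ} {x : Fin 2 → ℝ}

theorem pd_contDiff {m n : WithTop ℕ∞} (hf : ContDiff ℝ n f) (hmn : m + 1 ≤ n) (i : Fin 2) :
    ContDiff ℝ m (pd f i) :=
  (hf.fderiv_right hmn).clm_apply contDiff_const

theorem pd_add (hf : DifferentiableAt ℝ f x) (hg : DifferentiableAt ℝ g x) (i : Fin 2) :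
    pd (fun y => f y + g y) i x = pd f i x + pd g i x := by
  simp only [pd]
  rw [fderiv_fun_add hf hg]
  simp

theorem pd_sub (hf : DifferentiableAt ℝ f x) (hg : DifferentiableAt ℝ g x) (i : Fin 2) :
    pd (fun y => f y - g y) i x = pd f i x - pd g i x := by
  simp only [pd]
  rw [fderiv_fun_sub hf hg]
  simp

theorem pd_neg (i : Fin 2) : pd (fun y => -f y) i x = -pd f i x := by
  simp only [pd]
  rw [fderiv_fun_neg]
  simp

theorem pd_mul (hf : DifferentiableAt ℝ f x) (hg : DifferentiableAt ℝ g x) (i : Fin 2) :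
    pd (fun y => f y * g y) i x = f x * pd g i x + g x * pd f i x := by
  simp only [pd]
  rw [fderiv_fun_mul hf hg]
  simp

theorem pd_const_mul (c : ℝ) (hf : DifferentiableAt ℝ f x) (i : Fin 2) :
    pd (fun y => c * f y) i x = c * pd f i x := by
  simp only [pd]
  rw [fderiv_const_mul hf]
  simp

theorem pd_comm (hf : ContDiff ℝ 2 f) (i j : Fin 2) : pd (pd f i) j = pd (pd f j) i := by
  have key : ∀ (x : Fin 2 → ℝ) (k l : Fin 2), pd (pd f k) l x =
      fderiv ℝ (fderiv ℝ f) x (Pi.single l 1) (Pi.single k 1) := by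
    intro x k l
    have hd : DifferentiableAt ℝ (fderiv ℝ f) x :=
      ((hf.fderiv_right (m := 1) (by norm_num)).differentiable (by norm_num)) x
    change fderiv ℝ (fun y => fderiv ℝ f y (Pi.single k 1)) x (Pi.single l 1) = _
    rw [fderiv_clm_apply hd (differentiableAt_const _)]
    simp
  funext x
  rw [key, key]
  exact (hf.contDiffAt.isSymmSndFDerivAt (by simp)) _ _

end PartialDerivatives

/-- The divergence of `v(·, t)`, expanded by linearity and the product rule only. -/
theorem div2_step {a b p q T f g : (Fin 2 → ℝ) → ℝ} (μ β t : ℝ)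
    (ha : ContDiff ℝ 2 a) (hb : ContDiff ℝ 2 b) (hp : ContDiff ℝ 1 p) (hq : ContDiff ℝ 1 q)
    (hT : ContDiff ℝ 2 T) (hf : ContDiff ℝ 1 f) (hg : ContDiff ℝ 1 g) (x : Fin 2 → ℝ) :
    pd (fun y => a y + t * (μ * p y - (a y * pd a 0 y + b y * pd a 1 y)
        - β * pd T 0 y + f y)) 0 x +
      pd (fun y => b y + t * (μ * q y - (a y * pd b 0 y + b y * pd b 1 y)
        - β * pd T 1 y + g y)) 1 x =
    pd a 0 x + pd b 1 x + t * (μ * (pd p 0 x + pd q 1 x)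
      - (a x * pd (pd a 0) 0 x + pd a 0 x * pd a 0 x
        + (b x * pd (pd a 1) 0 x + pd a 1 x * pd b 0 x)
        + (a x * pd (pd b 0) 1 x + pd b 0 x * pd a 1 x)
        + (b x * pd (pd b 1) 1 x + pd b 1 x * pd b 1 x))
      - β * (pd (pd T 0) 0 x + pd (pd T 1) 1 x) + (pd f 0 x + pd g 1 x)) := by
  have da : DifferentiableAt ℝ a x := ha.differentiable (by norm_num) x
  have db : DifferentiableAt ℝ b x := hb.differentiable (by norm_num) x
  have dp : DifferentiableAt ℝ p x := hp.differentiable (by norm_num) x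
  have dq : DifferentiableAt ℝ q x := hq.differentiable (by norm_num) x
  have df : DifferentiableAt ℝ f x := hf.differentiable (by norm_num) x
  have dg : DifferentiableAt ℝ g x := hg.differentiable (by norm_num) x
  have dpd : ∀ {h : (Fin 2 → ℝ) → ℝ}, ContDiff ℝ 2 h → ∀ i, DifferentiableAt ℝ (pd h i) x :=
    fun hh i => (pd_contDiff (m := 1) hh (by norm_num) i).differentiable (by norm_num) x
  have da0 := dpd ha 0
  have da1 := dpd ha 1
  have db0 := dpd hb 0
  have db1 := dpd hb 1
  have dT0 := dpd hT 0
  have dT1 := dpd hT 1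
  rw [pd_add da (by fun_prop), pd_const_mul _ (by fun_prop), pd_add (by fun_prop) df,
    pd_sub (by fun_prop) (by fun_prop), pd_sub (by fun_prop) (by fun_prop),
    pd_const_mul _ dp, pd_const_mul _ dT0, pd_add (by fun_prop) (by fun_prop),
    pd_mul da da0, pd_mul db da1,
    pd_add db (by fun_prop), pd_const_mul _ (by fun_prop), pd_add (by fun_prop) dg,
    pd_sub (by fun_prop) (by fun_prop), pd_sub (by fun_prop) (by fun_prop),
    pd_const_mul _ dq, pd_const_mul _ dT1, pd_add (by fun_prop) (by fun_prop),
    pd_mul da db0, pd_mul db db1]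
  ring

/-- The Laplacian of a divergence-free `C³` field is divergence-free. -/
theorem div2_lap {a b : (Fin 2 → ℝ) → ℝ} (ha : ContDiff ℝ 3 a) (hb : ContDiff ℝ 3 b)
    (hab : pd b 1 = fun y => -pd a 0 y) (x : Fin 2 → ℝ) :
    pd (lap2 a) 0 x + pd (lap2 b) 1 x = 0 := by
  have d1 : ∀ {h : (Fin 2 → ℝ) → ℝ}, ContDiff ℝ 3 h → ∀ i, ContDiff ℝ 2 (pd h i) :=
    fun hh i => pd_contDiff hh (by norm_num) i
  have d2 : ∀ {h : (Fin 2 → ℝ) → ℝ}, ContDiff ℝ 3 h →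
      ∀ i j, DifferentiableAt ℝ (pd (pd h i) j) x :=
    fun hh i j => (pd_contDiff (m := 1) (d1 hh i) (by norm_num) j).differentiable (by norm_num) x
  have ha2 : ContDiff ℝ 2 a := ha.of_le (by norm_num)
  have hb2 : ContDiff ℝ 2 b := hb.of_le (by norm_num)
  have hneg : ∀ (h : (Fin 2 → ℝ) → ℝ) i, pd (fun y => -h y) i = fun y => -pd h i y :=
    fun h i => funext fun _ => pd_neg i
  unfold lap2
  rw [pd_add (d2 ha 0 0) (d2 ha 1 1), pd_add (d2 hb 0 0) (d2 hb 1 1),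
    pd_comm (d1 hb 0) 0 1, pd_comm hb2 0 1, pd_comm (d1 ha 1) 1 0, pd_comm ha2 1 0, hab]
  simp only [hneg]
  ring

/-- if the compatibility condition
(∂Ψ₁/∂x₂)(∂Ψ₂/∂x₁) + (∂Ψ₁/∂x₁)² + (β/2)ΔT⁰ - (1/2)div F⁰ = 0 holds everywhere,
then v(x,t) = Ψ(x) + t[μΔΨ - (Ψ·∇)Ψ - β∇T⁰ + F⁰](x) is divergence-free for every t. -/
theorem stmt3 (Ψ : (Fin 2 → ℝ) → Fin 2 → ℝ) (T0 : (Fin 2 → ℝ) → ℝ)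
    (F0 : (Fin 2 → ℝ) → Fin 2 → ℝ) (μ β : ℝ)
    (hΨ : ContDiff ℝ 3 Ψ) (hT0 : ContDiff ℝ 2 T0) (hF0 : ContDiff ℝ 1 F0)
    (hdiv : ∀ x, div2 Ψ x = 0)
    (hcompat : ∀ x, pd (fun y => Ψ y 0) 1 x * pd (fun y => Ψ y 1) 0 x +
      (pd (fun y => Ψ y 0) 0 x) ^ 2 + (β / 2) * lap2 T0 x - (1 / 2) * div2 F0 x = 0)
    (v : (Fin 2 → ℝ) → ℝ → Fin 2 → ℝ)
    (hv : v = fun x t i => Ψ x i +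
      t * (μ * lapv Ψ x i - conv2 Ψ x i - β * pd T0 i x + F0 x i)) :
    ∀ t x, div2 (fun y => v y t) x = 0 := by
  intro t x
  subst hv
  have ha : ContDiff ℝ 3 (fun y => Ψ y 0) := contDiff_pi.1 hΨ 0
  have hb : ContDiff ℝ 3 (fun y => Ψ y 1) := contDiff_pi.1 hΨ 1
  have ha2 : ContDiff ℝ 2 (fun y => Ψ y 0) := ha.of_le (by norm_num)
  have hb2 : ContDiff ℝ 2 (fun y => Ψ y 1) := hb.of_le (by norm_num)
  have hlap : ∀ {h : (Fin 2 → ℝ) → ℝ}, ContDiff ℝ 3 h → ContDiff ℝ 1 (lap2 h) := fun hh =>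
    (pd_contDiff (pd_contDiff (m := 2) hh (by norm_num) 0) (by norm_num) 0).add
      (pd_contDiff (pd_contDiff (m := 2) hh (by norm_num) 1) (by norm_num) 1)
  have hab : pd (fun y => Ψ y 1) 1 = fun y => -pd (fun y => Ψ y 0) 0 y := by
    funext y
    have h := hdiv y
    simp only [div2] at h
    linarith
  have hL := div2_lap ha hb hab x
  have hstep := div2_step μ β t ha2 hb2 (hlap ha) (hlap hb) hT0
    (contDiff_pi.1 hF0 0) (contDiff_pi.1 hF0 1) x
  have hc := hcompat x
  simp only [div2, lap2] at hc
  refine hstep.trans ?_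
  -- The second-order terms cancel once every `∂₂b` is replaced by `-∂₁a`.
  rw [hL, pd_comm ha2 1 0, pd_comm hb2 0 1, hab, pd_neg, pd_neg]
  linear_combination (-2 * t) * hc
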